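/- Let X_n = (ℂⁿ,‖·‖) be a complex Banach space, m ≥ 1, and J ⊆ Λ(m,n) nonempty. Then λ(𝒫_J(X_n)) ≤ c(m,X_n) · ‖Q_{Λ(m,n),J}‖ · λ(X_n*)^m, where c(m,X_n) = sup{‖P̌‖ : P ∈ 𝒫_m(X_n), ‖P‖ ≤ 1} is the m-th polarization constant of X_n (P̌ denoting the unique symmetric m-linear form with P̌(z,…,z) = P(z), with the supremum norm over the unit ball of X_n in each variable) and Q_{Λ(m,n),J} : 𝒫_m(X_n) → 𝒫_J(X_n) is the coefficient projection annihilating all monomial coefficients c_α with α ∉ J. In particular, since c(m,X_n) ≤ m^m/m!, one has λ(𝒫_m(X_n)) ≤ (m^m/m!) · λ(X_n*)^m. -/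

import Mathlib

/-!
Write `S` for the unit sphere of `X = (ℂⁿ, ν)`. A projection `Q` of `ℓ∞(S)` onto `X*` is a linear
family of functionals `φ_z` on `ℓ∞(S)` with `‖φ_z‖ ≤ ‖Q‖` for `z ∈ S` and `φ_z(x*) = x*(z)`
(`exists_phi`). Iterating `φ_z` in each of `m` variables gives a functional on bounded functions
on `Sᵐ` (`iter`) that has norm at most `‖Q‖^m`, sends an `m`-linear form `T` to `T(z,…,z)`, and
depends on `z` as an `m`-homogeneous polynomial (`norm_iter_le`, `iter_form`, `iter_pol`).

For each `s ∈ Sᵐ` the functional `P ↦ P̌(s)` on `𝒫_m(X) ⊆ ℓ∞(S)` has norm at most `c(m,X)`, so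
Hahn–Banach extends it to `ℓ∞(S)` (`exists_polar_ext`). These extensions together form a map
`ℓ∞(S) → ℓ∞(Sᵐ)` of norm at most `c(m,X)` extending `P ↦ P̌`. Composing it with the iterated
functionals projects `ℓ∞(S)` onto `𝒫_m(X)` with norm at most `c(m,X) ‖Q‖^m`, and following with the
coefficient projection projects onto `𝒫_J(X)` (`projConst_le_of_proj`). The infimum over `Q` is the
first claim. The second one uses `c(m,X) ≤ m^m/m!`, which comes from the signed polarization
formula (`polarization`, `norm_form_le`).

Since the constants are suprema and infima of sets of reals, the corresponding sets are also shown
to be bounded or nonempty. This rests on the equivalence of norms in finite dimension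
(`core_bound`) and on the existence of some projection onto `X*` (`exists_dual_proj`).
-/

open scoped ENNReal

/-- The set `Λ(m,n)` of all multi-indices `α ∈ ℕ₀ⁿ` with `|α| = m`. -/
def homIdx (m n : ℕ) : Finset (Fin n → ℕ) :=
  (Fintype.piFinset fun _ : Fin n => Finset.range (m + 1)).filter fun α => ∑ j, α j = m

/-- The norm of the polynomial `z ↦ ∑_{α ∈ I} c_α z^α` on the unit ball of `(ℂⁿ, ν)`. -/
noncomputable def polNorm (n : ℕ) (ν : (Fin n → ℂ) → ℝ) (I : Finset (Fin n → ℕ))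
    (c : (Fin n → ℕ) → ℂ) : ℝ :=
  sSup {t : ℝ | ∃ z : Fin n → ℂ, ν z ≤ 1 ∧ t = ‖∑ α ∈ I, c α * ∏ j, z j ^ α j‖}

/-- The isometric copy, inside `ℓ∞(S)` (`S` the unit sphere of the norm `ν` on `ℂⁿ`),
of the space of polynomials supported on the finite index set `I`. -/
def polyCopy (n : ℕ) (ν : (Fin n → ℂ) → ℝ) (I : Finset (Fin n → ℕ)) :
    Set (lp (fun _ : {z : Fin n → ℂ // ν z = 1} => ℂ) ∞) :=
  {f | ∃ c : (Fin n → ℕ) → ℂ, ∀ s : {z : Fin n → ℂ // ν z = 1},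
      f s = ∑ α ∈ I, c α * ∏ j, (s : Fin n → ℂ) j ^ α j}

/-- The projection constant `λ(𝒫_I(X_n))`. -/
noncomputable def projConst (n : ℕ) (ν : (Fin n → ℂ) → ℝ) (I : Finset (Fin n → ℕ)) : ℝ :=
  sInf {r : ℝ | ∃ Q : lp (fun _ : {z : Fin n → ℂ // ν z = 1} => ℂ) ∞ →L[ℂ]
      lp (fun _ : {z : Fin n → ℂ // ν z = 1} => ℂ) ∞,
    (∀ f, Q f ∈ polyCopy n ν I) ∧ (∀ f ∈ polyCopy n ν I, Q f = f) ∧ ‖Q‖ = r}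

/-- The isometric copy, inside `ℓ∞(S)`, of the dual space `X_n* = (ℂⁿ, ν)*`, obtained by
restricting linear functionals to the unit sphere `S`. -/
def dualCopy (n : ℕ) (ν : (Fin n → ℂ) → ℝ) :
    Set (lp (fun _ : {z : Fin n → ℂ // ν z = 1} => ℂ) ∞) :=
  {f | ∃ w : Fin n → ℂ, ∀ s : {z : Fin n → ℂ // ν z = 1},
      f s = ∑ j, w j * (s : Fin n → ℂ) j}

/-- The projection constant `λ(X_n*)` of the dual of `X_n = (ℂⁿ, ν)`. -/
noncomputable def dualProjConst (n : ℕ) (ν : (Fin n → ℂ) → ℝ) : ℝ :=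
  sInf {r : ℝ | ∃ Q : lp (fun _ : {z : Fin n → ℂ // ν z = 1} => ℂ) ∞ →L[ℂ]
      lp (fun _ : {z : Fin n → ℂ // ν z = 1} => ℂ) ∞,
    (∀ f, Q f ∈ dualCopy n ν) ∧ (∀ f ∈ dualCopy n ν, Q f = f) ∧ ‖Q‖ = r}

/-- The norm `‖Q_{Λ(m,n),J}‖` of the coefficient projection
`Q_{Λ(m,n),J} : 𝒫_m(X_n) → 𝒫_J(X_n)` annihilating all monomial coefficients `c_α`, `α ∉ J`. -/
noncomputable def coeffProjNorm (n m : ℕ) (ν : (Fin n → ℂ) → ℝ) (J : Finset (Fin n → ℕ)) : ℝ :=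
  sSup {t : ℝ | ∃ c : (Fin n → ℕ) → ℂ, polNorm n ν (homIdx m n) c ≤ 1 ∧ t = polNorm n ν J c}

/-- The `m`-th polarization constant `c(m, X_n)`: the supremum of the norms of the unique
symmetric `m`-linear forms `P̌` associated to `m`-homogeneous polynomials `P` of norm at
most one. -/
noncomputable def polarConst (n m : ℕ) (ν : (Fin n → ℂ) → ℝ) : ℝ :=
  sSup {t : ℝ | ∃ (c : (Fin n → ℕ) → ℂ)
      (T : MultilinearMap ℂ (fun _ : Fin m => (Fin n → ℂ)) ℂ),
    (∀ (σ : Equiv.Perm (Fin m)) (z : Fin m → (Fin n → ℂ)), T (z ∘ σ) = T z) ∧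
    (∀ z : Fin n → ℂ, T (fun _ => z) = ∑ α ∈ homIdx m n, c α * ∏ j, z j ^ α j) ∧
    polNorm n ν (homIdx m n) c ≤ 1 ∧
    t = sSup {u : ℝ | ∃ z : Fin m → (Fin n → ℂ), (∀ i, ν (z i) ≤ 1) ∧ u = ‖T z‖}}

/-- The hypothesis that `ν` is a norm on `ℂⁿ`. -/
structure IsNu (n : ℕ) (ν : (Fin n → ℂ) → ℝ) : Prop where
  hdef : ∀ z, ν z = 0 → z = 0
  hsmul : ∀ (a : ℂ) (z : Fin n → ℂ), ν (a • z) = ‖a‖ * ν z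
  htri : ∀ z w : Fin n → ℂ, ν (z + w) ≤ ν z + ν w

/-- The polynomial function `z ↦ ∑_{α ∈ I} c_α z^α`. -/
noncomputable def pol {n : ℕ} (I : Finset (Fin n → ℕ)) (c : (Fin n → ℕ) → ℂ) (z : Fin n → ℂ) : ℂ :=
  ∑ α ∈ I, c α * ∏ j, z j ^ α j

/-- The unit sphere of `(ℂⁿ, ν)`. -/
abbrev Sph (n : ℕ) (ν : (Fin n → ℂ) → ℝ) := {z : Fin n → ℂ // ν z = 1}

/-- The space `ℓ∞(S)` over the unit sphere `S` of `(ℂⁿ, ν)`. -/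
noncomputable abbrev LS (n : ℕ) (ν : (Fin n → ℂ) → ℝ) := lp (fun _ : Sph n ν => ℂ) ∞

/-! ### Equivalence of norms and homogeneity -/

/-- Linear functionals on a finite-dimensional space are bounded for any norm, the norm being
given here as a bare function. -/
lemma core_bound {V : Type*} [AddCommGroup V] [Module ℂ V] [FiniteDimensional ℂ V]
    (ν : V → ℝ) (h0 : ∀ v, 0 ≤ ν v) (hdef : ∀ z, ν z = 0 → z = 0)
    (hsmul : ∀ (a : ℂ) (z : V), ν (a • z) = ‖a‖ * ν z)
    (htri : ∀ z w : V, ν (z + w) ≤ ν z + ν w) (ψ : V →ₗ[ℂ] ℂ) :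
    ∃ C, 0 ≤ C ∧ ∀ v, ‖ψ v‖ ≤ C * ν v := by
  let : Norm V := ⟨ν⟩
  have core : NormedSpace.Core ℂ V :=
    { norm_nonneg := h0
      norm_smul := hsmul
      norm_triangle := htri
      norm_eq_zero_iff := fun x => ⟨hdef x, by
        rintro rfl
        have := hsmul 0 0
        rw [norm_zero, zero_mul] at this
        rwa [smul_zero] at this⟩ }
  let : NormedAddCommGroup V := NormedAddCommGroup.ofCore core
  let : NormedSpace ℂ V := NormedSpace.ofCore core
  let f := LinearMap.toContinuousLinearMap ψ
  exact ⟨‖f‖, norm_nonneg _, fun v => f.le_opNorm v⟩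

section Nu
variable {n m : ℕ} {ν : (Fin n → ℂ) → ℝ}

lemma IsNu.zero (h : IsNu n ν) : ν 0 = 0 := by simpa using h.hsmul 0 0

lemma IsNu.nonneg (h : IsNu n ν) (z : Fin n → ℂ) : 0 ≤ ν z := by
  have h1 := h.htri z ((-1 : ℂ) • z)
  rw [h.hsmul] at h1
  have : z + (-1 : ℂ) • z = 0 := by simp
  rw [this, h.zero] at h1
  simp at h1
  linarith

lemma IsNu.coord (h : IsNu n ν) (j : Fin n) : ∃ C, 0 ≤ C ∧ ∀ z, ‖z j‖ ≤ C * ν z :=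
  core_bound ν h.nonneg h.hdef h.hsmul h.htri (LinearMap.proj j)

lemma IsNu.sum_le (h : IsNu n ν) {ι : Type*} (s : Finset ι) (z : ι → Fin n → ℂ) :
    ν (∑ i ∈ s, z i) ≤ ∑ i ∈ s, ν (z i) := by
  classical
  induction s using Finset.induction_on with
  | empty => simp [h.zero]
  | insert a s ha ih =>
    rw [Finset.sum_insert ha, Finset.sum_insert ha]
    exact (h.htri _ _).trans (by gcongr)

/-- Every vector is a scalar multiple of a point of the sphere, unless it vanishes. -/
lemma IsNu.decomp (h : IsNu n ν) (z : Fin n → ℂ) (hz : z ≠ 0) :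
    ∃ s : Sph n ν, z = (ν z : ℂ) • (s : Fin n → ℂ) := by
  have hν : ν z ≠ 0 := fun h' => hz (h.hdef z h')
  refine ⟨⟨((ν z : ℂ))⁻¹ • z, ?_⟩, ?_⟩
  · rw [h.hsmul, norm_inv, Complex.norm_real, Real.norm_of_nonneg (h.nonneg z)]
    exact inv_mul_cancel₀ hν
  · simp only
    rw [smul_smul, mul_inv_cancel₀ (by exact_mod_cast hν), one_smul]

lemma mem_homIdx {α : Fin n → ℕ} : α ∈ homIdx m n ↔ ∑ j, α j = m := by
  simp only [homIdx, Finset.mem_filter, Fintype.mem_piFinset, Finset.mem_range,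
    and_iff_right_iff_imp]
  intro h j
  have : α j ≤ ∑ j, α j := Finset.single_le_sum (fun _ _ => Nat.zero_le _) (Finset.mem_univ j)
  omega

variable {I : Finset (Fin n → ℕ)}

lemma pol_smul (hI : I ⊆ homIdx m n) (c : (Fin n → ℕ) → ℂ) (a : ℂ) (z : Fin n → ℂ) :
    pol I c (a • z) = a ^ m * pol I c z := by
  unfold pol
  rw [Finset.mul_sum]
  refine Finset.sum_congr rfl fun α hα => ?_
  have := mem_homIdx.1 (hI hα)
  simp only [Pi.smul_apply, smul_eq_mul, mul_pow, Finset.prod_mul_distrib,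
    Finset.prod_pow_eq_pow_sum, this]
  ring

lemma pol_zero (hm : 1 ≤ m) (hI : I ⊆ homIdx m n) (c : (Fin n → ℕ) → ℂ) :
    pol I c 0 = 0 := by
  have := pol_smul hI c 0 0
  rw [smul_zero, zero_pow (by omega), zero_mul] at this
  exact this

lemma pol_bdd (h : IsNu n ν) (I : Finset (Fin n → ℕ)) (c : (Fin n → ℕ) → ℂ) :
    ∃ B, ∀ z, ν z ≤ 1 → ‖pol I c z‖ ≤ B := by
  choose C hC0 hC using h.coord
  refine ⟨∑ α ∈ I, ‖c α‖ * ∏ j, C j ^ α j, fun z hz => ?_⟩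
  refine (norm_sum_le _ _).trans (Finset.sum_le_sum fun α _ => ?_)
  rw [norm_mul, norm_prod]
  gcongr with j
  rw [norm_pow]
  gcongr
  exact (hC j z).trans (mul_le_of_le_one_right (hC0 j) hz)

lemma norm_pol_le_polNorm (h : IsNu n ν) (I : Finset (Fin n → ℕ)) (c : (Fin n → ℕ) → ℂ)
    {z : Fin n → ℂ} (hz : ν z ≤ 1) : ‖pol I c z‖ ≤ polNorm n ν I c := by
  obtain ⟨B, hB⟩ := pol_bdd h I c
  refine le_csSup ⟨B, ?_⟩ ⟨z, hz, rfl⟩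
  rintro _ ⟨z, hz, rfl⟩
  exact hB z hz

/-- An `m`-homogeneous bound on the sphere gives a bound on the whole space. -/
lemma norm_pol_le_of_sphere (h : IsNu n ν) (hm : 1 ≤ m) (hI : I ⊆ homIdx m n)
    (c : (Fin n → ℕ) → ℂ) {M : ℝ}
    (hs : ∀ s : Sph n ν, ‖pol I c s‖ ≤ M) (z : Fin n → ℂ) :
    ‖pol I c z‖ ≤ M * ν z ^ m := by
  by_cases hz : z = 0
  · subst hz
    rw [pol_zero hm hI, h.zero, zero_pow (by omega)]; simp
  · obtain ⟨s, hs'⟩ := h.decomp z hz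
    have hn := h.nonneg z
    generalize ν z = r at *
    rw [hs', pol_smul hI, norm_mul, norm_pow, Complex.norm_real, Real.norm_of_nonneg hn, mul_comm]
    gcongr
    exact hs s

lemma polNorm_le (h : IsNu n ν) (hm : 1 ≤ m) (hI : I ⊆ homIdx m n)
    (c : (Fin n → ℕ) → ℂ) {M : ℝ} (hM : 0 ≤ M)
    (hs : ∀ s : Sph n ν, ‖pol I c s‖ ≤ M) : polNorm n ν I c ≤ M := by
  refine Real.sSup_le ?_ hM
  rintro _ ⟨z, hz, rfl⟩
  refine (norm_pol_le_of_sphere h hm hI c hs z).trans ?_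
  exact mul_le_of_le_one_right hM (pow_le_one₀ (h.nonneg z) hz)

lemma norm_pol_le_mul (h : IsNu n ν) (hm : 1 ≤ m) (hI : I ⊆ homIdx m n)
    (c : (Fin n → ℕ) → ℂ) (z : Fin n → ℂ) :
    ‖pol I c z‖ ≤ polNorm n ν I c * ν z ^ m :=
  norm_pol_le_of_sphere h hm hI c (fun s => norm_pol_le_polNorm h I c s.2.le) z

lemma pol_coeff_eq_zero (c : (Fin n → ℕ) → ℂ) (hc : ∀ z, pol I c z = 0) :
    ∀ α ∈ I, c α = 0 := by
  intro α hα
  let p : MvPolynomial (Fin n) ℂ :=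
    ∑ β ∈ I, MvPolynomial.monomial (Finsupp.equivFunOnFinite.symm β) (c β)
  have hp : p = 0 := by
    apply MvPolynomial.funext
    intro z
    rw [map_zero, ← hc z]
    simp only [p, map_sum, MvPolynomial.eval_monomial, pol]
    refine Finset.sum_congr rfl fun β _ => ?_
    rw [Finsupp.prod_fintype _ _ (by simp)]
    simp
  have : MvPolynomial.coeff (Finsupp.equivFunOnFinite.symm α) p = c α := by
    simp only [p, MvPolynomial.coeff_sum, MvPolynomial.coeff_monomial,
      EmbeddingLike.apply_eq_iff_eq]
    simp [hα]
  rw [← this, hp]; simp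

end Nu

/-! ### Polarization -/

section Polar
variable {m : ℕ}

/-- The signs average to zero against any non-permutation: flipping the sign at an index
missed by `r` negates the product. -/
lemma polar_sign_sum (r : Fin m → Fin m) :
    ∑ ε : Fin m → ℤˣ, (∏ i, (((ε i : ℤ)) : ℂ)) * ∏ i, (((ε (r i) : ℤ)) : ℂ) =
      if Function.Bijective r then 2 ^ m else 0 := by
  classical
  split_ifs with hr
  · have : ∀ ε : Fin m → ℤˣ, (∏ i, (((ε i : ℤ)) : ℂ)) * ∏ i, (((ε (r i) : ℤ)) : ℂ) = 1 := by
      intro ε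
      rw [Function.Bijective.prod_comp hr (fun i => (((ε i : ℤ)) : ℂ)), ← Finset.prod_mul_distrib]
      refine Finset.prod_eq_one fun i _ => ?_
      rcases Int.units_eq_one_or (ε i) with h | h <;> simp [h]
    simp [this]
  · have hs : ¬ Function.Surjective r := fun hs => hr (Finite.surjective_iff_bijective.1 hs)
    obtain ⟨k, hk⟩ := not_forall.1 hs
    let e : Equiv.Perm (Fin m → ℤˣ) := Equiv.mulRight (Function.update 1 k (-1))
    have key := Equiv.sum_comp e
      (fun ε : Fin m → ℤˣ => (∏ i, (((ε i : ℤ)) : ℂ)) * ∏ i, (((ε (r i) : ℤ)) : ℂ))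
    have h2 : ∀ ε : Fin m → ℤˣ,
        (∏ i, (((e ε i : ℤ)) : ℂ)) * ∏ i, (((e ε (r i) : ℤ)) : ℂ) =
        -((∏ i, (((ε i : ℤ)) : ℂ)) * ∏ i, (((ε (r i) : ℤ)) : ℂ)) := by
      intro ε
      have h3 : ∀ i, e ε (r i) = ε (r i) := by
        intro i
        have : r i ≠ k := fun h => hk ⟨i, h⟩
        simp [e, Function.update_of_ne this]
      have h4 : ∏ i, (((e ε i : ℤ)) : ℂ) = -∏ i, (((ε i : ℤ)) : ℂ) := by
        have : ∀ i, (((e ε i : ℤ)) : ℂ) =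
            ((ε i : ℤ) : ℂ) * (Function.update 1 k (-1) : Fin m → ℂ) i := by
          intro i
          by_cases hi : i = k
          · subst hi; simp [e]
          · simp [e, Function.update_of_ne hi]
        simp only [this, Finset.prod_mul_distrib]
        rw [Finset.prod_update_of_mem (Finset.mem_univ k)]
        simp
      simp only [h3, h4]
      ring
    simp only [h2, Finset.sum_neg_distrib] at key
    linear_combination (-1/2 : ℂ) * key

/-- The signed polarization formula. -/
lemma polarization {V : Type*} [AddCommGroup V] [Module ℂ V]
    (T : MultilinearMap ℂ (fun _ : Fin m => V) ℂ)
    (hT : ∀ (σ : Equiv.Perm (Fin m)) (z : Fin m → V), T (z ∘ σ) = T z) (z : Fin m → V) :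
    ∑ ε : Fin m → ℤˣ, (∏ i, (((ε i : ℤ)) : ℂ)) *
        T (fun _ => ∑ i, (((ε i : ℤ)) : ℂ) • z i) =
      2 ^ m * (Nat.factorial m : ℂ) * T z := by
  classical
  have h1 : ∀ ε : Fin m → ℤˣ, T (fun _ => ∑ i, (((ε i : ℤ)) : ℂ) • z i) =
      ∑ r : Fin m → Fin m, (∏ i, (((ε (r i) : ℤ)) : ℂ)) * T (fun i => z (r i)) := by
    intro ε
    rw [MultilinearMap.map_sum]
    refine Finset.sum_congr rfl fun r _ => ?_
    rw [MultilinearMap.map_smul_univ, smul_eq_mul]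
  simp only [h1, Finset.mul_sum]
  rw [Finset.sum_comm]
  simp only [← mul_assoc, ← Finset.sum_mul, polar_sign_sum]
  have h2 : ∀ r : Fin m → Fin m,
      (if Function.Bijective r then (2 : ℂ) ^ m else 0) * T (fun i => z (r i)) =
      if Function.Bijective r then 2 ^ m * T z else 0 := by
    intro r
    split_ifs with hr
    · rw [← hT (Equiv.ofBijective r hr) z]; rfl
    · simp
  simp only [h2]
  rw [← Finset.sum_filter, Finset.sum_const, nsmul_eq_mul]
  have h3 : (Finset.univ.filter fun r : Fin m → Fin m => Function.Bijective r).card =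
      Nat.factorial m := by
    rw [← Fintype.card_subtype]
    rw [Fintype.card_congr (Equiv.ofBijective
      (fun σ : Equiv.Perm (Fin m) => (⟨σ, σ.bijective⟩ : {r // Function.Bijective r}))
      ⟨fun a b hab => by
        apply Equiv.coe_fn_injective
        exact congrArg Subtype.val hab, fun r => ⟨Equiv.ofBijective r.1 r.2, rfl⟩⟩).symm]
    simp [Fintype.card_perm]
  rw [h3]
  ring

/-- The monomial `z^α` is the diagonal of the product form `∏ᵢ zᵢ(g i)`, where `g` takes the
value `j` exactly `αⱼ` times. -/
lemma exists_form_monomial {n : ℕ} (α : Fin n → ℕ) (hα : ∑ j, α j = m) :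
    ∃ T : MultilinearMap ℂ (fun _ : Fin m => (Fin n → ℂ)) ℂ,
      ∀ z, T (fun _ => z) = ∏ j, z j ^ α j := by
  let e : (Σ j : Fin n, Fin (α j)) ≃ Fin m := Fintype.equivOfCardEq (by simp [hα])
  refine ⟨(MultilinearMap.mkPiAlgebra ℂ (Fin m) ℂ).compLinearMap
    (fun i => LinearMap.proj (e.symm i).1), fun z => ?_⟩
  simp only [MultilinearMap.compLinearMap_apply, MultilinearMap.mkPiAlgebra_apply,
    LinearMap.proj_apply]
  rw [Equiv.prod_comp e.symm (fun x => z x.1), Fintype.prod_sigma]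
  simp

/-- Every `m`-homogeneous polynomial has a symmetric `m`-linear form. -/
lemma exists_sym_form {n : ℕ} (c : (Fin n → ℕ) → ℂ) :
    ∃ T : MultilinearMap ℂ (fun _ : Fin m => (Fin n → ℂ)) ℂ,
      (∀ (σ : Equiv.Perm (Fin m)) (z : Fin m → (Fin n → ℂ)), T (z ∘ σ) = T z) ∧
      ∀ z, T (fun _ => z) = pol (homIdx m n) c z := by
  classical
  have h1 : ∀ α : Fin n → ℕ, ∃ T : MultilinearMap ℂ (fun _ : Fin m => (Fin n → ℂ)) ℂ,
      α ∈ homIdx m n → ∀ z, T (fun _ => z) = ∏ j, z j ^ α j := by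
    intro α
    by_cases hα : α ∈ homIdx m n
    · obtain ⟨T, hT⟩ := exists_form_monomial α (mem_homIdx.1 hα)
      exact ⟨T, fun _ => hT⟩
    · exact ⟨0, fun h => absurd h hα⟩
  choose M hM using h1
  let U : MultilinearMap ℂ (fun _ : Fin m => (Fin n → ℂ)) ℂ := ∑ α ∈ homIdx m n, c α • M α
  have hU : ∀ z, U (fun _ => z) = pol (homIdx m n) c z := by
    intro z
    simp only [U, sum_apply, smul_apply, smul_eq_mul, pol]
    exact Finset.sum_congr rfl fun α hα => by rw [hM α hα]
  refine ⟨((Nat.factorial m : ℂ))⁻¹ • ∑ τ : Equiv.Perm (Fin m), U.domDomCongr τ, ?_, ?_⟩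
  · intro σ z
    simp only [smul_apply, sum_apply,
      MultilinearMap.domDomCongr_apply, smul_eq_mul, Function.comp_apply]
    congr 1
    exact Equiv.sum_comp (Equiv.mulLeft σ) (fun τ : Equiv.Perm (Fin m) => U fun i => z (τ i))
  · intro z
    simp only [smul_apply, sum_apply,
      MultilinearMap.domDomCongr_apply, smul_eq_mul, hU, Finset.sum_const, Finset.card_univ,
      Fintype.card_perm, Fintype.card_fin, nsmul_eq_mul]
    rw [inv_mul_cancel_left₀]
    exact_mod_cast Nat.factorial_ne_zero m

lemma norm_form_le {n : ℕ} {ν : (Fin n → ℂ) → ℝ} (h : IsNu n ν) (hm : 1 ≤ m)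
    {c : (Fin n → ℕ) → ℂ} {T : MultilinearMap ℂ (fun _ : Fin m => (Fin n → ℂ)) ℂ}
    (hT : ∀ (σ : Equiv.Perm (Fin m)) (z : Fin m → (Fin n → ℂ)), T (z ∘ σ) = T z)
    (hc : ∀ z, T (fun _ => z) = pol (homIdx m n) c z)
    (hP : polNorm n ν (homIdx m n) c ≤ 1) (z : Fin m → Fin n → ℂ) (hz : ∀ i, ν (z i) ≤ 1) :
    ‖T z‖ ≤ (m : ℝ) ^ m / (Nat.factorial m : ℝ) := by
  have h1 := polarization T hT z
  have hf : (0 : ℝ) < Nat.factorial m := by exact_mod_cast Nat.factorial_pos m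
  have hε : ∀ (ε : Fin m → ℤˣ) i, ‖(((ε i : ℤ)) : ℂ)‖ = 1 := by
    intro ε i
    rcases Int.units_eq_one_or (ε i) with h | h <;> simp [h]
  have h2 : ∀ ε : Fin m → ℤˣ, ‖(∏ i, (((ε i : ℤ)) : ℂ)) *
        T (fun _ => ∑ i, (((ε i : ℤ)) : ℂ) • z i)‖ ≤ (m : ℝ) ^ m := by
    intro ε
    rw [norm_mul, norm_prod, Finset.prod_congr rfl (fun i _ => hε ε i), Finset.prod_const_one,
      one_mul, hc]
    refine (norm_pol_le_mul h hm subset_rfl c _).trans ?_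
    refine (mul_le_of_le_one_left (pow_nonneg (h.nonneg _) _) hP).trans ?_
    have h0 := h.nonneg
    gcongr
    · exact h0 _
    refine (h.sum_le _ _).trans ?_
    refine (Finset.sum_le_card_nsmul _ _ 1 fun i _ => ?_).trans (by simp)
    rw [h.hsmul, hε, one_mul]
    exact hz i
  have h3 := (norm_sum_le Finset.univ (fun ε : Fin m → ℤˣ => (∏ i, (((ε i : ℤ)) : ℂ)) *
        T (fun _ => ∑ i, (((ε i : ℤ)) : ℂ) • z i))).trans
        (Finset.sum_le_card_nsmul _ _ _ fun ε _ => h2 ε)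
  rw [h1] at h3
  simp only [norm_mul, norm_pow, Complex.norm_natCast, Complex.norm_ofNat, Finset.card_univ,
    Fintype.card_fun, Fintype.card_fin, nsmul_eq_mul, Fintype.card_units_int,
    Nat.cast_pow, Nat.cast_ofNat] at h3
  rw [le_div_iff₀ hf]
  have h4 : (0 : ℝ) < 2 ^ m := by positivity
  refine le_of_mul_le_mul_left ?_ h4
  linarith

section polarConst
variable {n : ℕ} {ν : (Fin n → ℂ) → ℝ}

lemma polarConst_bound (h : IsNu n ν) (hm : 1 ≤ m) {t : ℝ}
    (ht : ∃ (c : (Fin n → ℕ) → ℂ)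
      (T : MultilinearMap ℂ (fun _ : Fin m => (Fin n → ℂ)) ℂ),
    (∀ (σ : Equiv.Perm (Fin m)) (z : Fin m → (Fin n → ℂ)), T (z ∘ σ) = T z) ∧
    (∀ z : Fin n → ℂ, T (fun _ => z) = ∑ α ∈ homIdx m n, c α * ∏ j, z j ^ α j) ∧
    polNorm n ν (homIdx m n) c ≤ 1 ∧
    t = sSup {u : ℝ | ∃ z : Fin m → (Fin n → ℂ), (∀ i, ν (z i) ≤ 1) ∧ u = ‖T z‖}) :
    t ≤ (m : ℝ) ^ m / (Nat.factorial m : ℝ) := by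
  obtain ⟨c, T, hT, hc, hP, rfl⟩ := ht
  refine Real.sSup_le ?_ (by positivity)
  rintro _ ⟨z, hz, rfl⟩
  exact norm_form_le h hm hT hc hP z hz

lemma polarConst_le (h : IsNu n ν) (hm : 1 ≤ m) :
    polarConst n m ν ≤ (m : ℝ) ^ m / (Nat.factorial m : ℝ) :=
  Real.sSup_le (fun _ ht => polarConst_bound h hm ht) (by positivity)

lemma polarConst_nonneg : 0 ≤ polarConst n m ν := by
  refine Real.sSup_nonneg ?_
  rintro _ ⟨c, T, -, -, -, rfl⟩
  refine Real.sSup_nonneg ?_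
  rintro _ ⟨z, -, rfl⟩
  exact norm_nonneg _

lemma norm_form_le_polarConst (h : IsNu n ν) (hm : 1 ≤ m)
    {c : (Fin n → ℕ) → ℂ} {T : MultilinearMap ℂ (fun _ : Fin m => (Fin n → ℂ)) ℂ}
    (hT : ∀ (σ : Equiv.Perm (Fin m)) (z : Fin m → (Fin n → ℂ)), T (z ∘ σ) = T z)
    (hc : ∀ z, T (fun _ => z) = pol (homIdx m n) c z)
    (hP : polNorm n ν (homIdx m n) c ≤ 1) (z : Fin m → Fin n → ℂ) (hz : ∀ i, ν (z i) ≤ 1) :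
    ‖T z‖ ≤ polarConst n m ν := by
  have h1 : ‖T z‖ ≤ sSup {u : ℝ | ∃ z : Fin m → (Fin n → ℂ), (∀ i, ν (z i) ≤ 1) ∧ u = ‖T z‖} := by
    refine le_csSup ⟨(m : ℝ) ^ m / (Nat.factorial m : ℝ), ?_⟩ ⟨z, hz, rfl⟩
    rintro _ ⟨z, hz, rfl⟩
    exact norm_form_le h hm hT hc hP z hz
  refine h1.trans (le_csSup ⟨(m : ℝ) ^ m / (Nat.factorial m : ℝ), fun t ht =>
    polarConst_bound h hm ht⟩ ⟨c, T, hT, hc, hP, rfl⟩)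

/-- Homogeneous version of the estimate defining the polarization constant. -/
lemma norm_form_le_of_sphere (h : IsNu n ν) (hm : 1 ≤ m)
    {c : (Fin n → ℕ) → ℂ} {T : MultilinearMap ℂ (fun _ : Fin m => (Fin n → ℂ)) ℂ}
    (hT : ∀ (σ : Equiv.Perm (Fin m)) (z : Fin m → (Fin n → ℂ)), T (z ∘ σ) = T z)
    (hc : ∀ z, T (fun _ => z) = pol (homIdx m n) c z) {M : ℝ} (hM : 0 ≤ M)
    (hP : ∀ s : Sph n ν, ‖pol (homIdx m n) c s‖ ≤ M)
    (z : Fin m → Fin n → ℂ) (hz : ∀ i, ν (z i) ≤ 1) :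
    ‖T z‖ ≤ polarConst n m ν * M := by
  rcases hM.eq_or_lt with rfl | hM
  · have h0 : ∀ y, T (fun _ => y) = 0 := by
      intro y
      rw [hc]
      simpa using norm_pol_le_of_sphere h hm subset_rfl c hP y
    have h1 := polarization T hT z
    simp only [h0, mul_zero, Finset.sum_const_zero] at h1
    have h2 : (2 : ℂ) ^ m * (Nat.factorial m : ℂ) ≠ 0 :=
      mul_ne_zero (pow_ne_zero _ two_ne_zero) (by exact_mod_cast Nat.factorial_ne_zero m)
    have := (mul_eq_zero.1 h1.symm).resolve_left h2
    simp [this]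
  · have hpol : ∀ y, pol (homIdx m n) (fun α => ((M : ℂ))⁻¹ * c α) y =
        ((M : ℂ))⁻¹ * pol (homIdx m n) c y := by
      intro y
      simp only [pol, Finset.mul_sum, mul_assoc]
    have := norm_form_le_polarConst (ν := ν) h hm (c := fun α => ((M : ℂ))⁻¹ * c α)
      (T := ((M : ℂ))⁻¹ • T) (fun σ z => by simp [hT]) (fun z => by
        rw [hpol, ← hc]; simp) (polNorm_le h hm subset_rfl _ zero_le_one fun s => by
        rw [hpol, norm_mul, norm_inv, Complex.norm_real, Real.norm_of_nonneg hM.le,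
          inv_mul_le_iff₀ hM, mul_one]
        exact hP s) z hz
    rw [smul_apply, norm_smul, norm_inv, Complex.norm_real,
      Real.norm_of_nonneg hM.le, inv_mul_le_iff₀ hM] at this
    linarith

end polarConst
end Polar

/-! ### Linear maps into `ℓ∞(S)` -/

section Lp
variable {n m : ℕ} {ν : (Fin n → ℂ) → ℝ}

/-- A bounded function on the sphere as an element of `ℓ∞(S)`. -/
noncomputable def toLS (f : Sph n ν → ℂ) (hf : ∃ B, ∀ s, ‖f s‖ ≤ B) : LS n ν :=
  ⟨f, memℓp_infty (by
    obtain ⟨B, hB⟩ := hf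
    refine ⟨B, ?_⟩
    rintro _ ⟨s, rfl⟩
    exact hB s)⟩

lemma toLS_apply (f : Sph n ν → ℂ) (hf : ∃ B, ∀ s, ‖f s‖ ≤ B) (s : Sph n ν) :
    toLS f hf s = f s := rfl

/-- Assembles a linear map into `ℓ∞(S)` from a linear map into functions with bounded values. -/
noncomputable def linLS {V : Type*} [AddCommGroup V] [Module ℂ V] (g : V →ₗ[ℂ] (Sph n ν → ℂ))
    (hg : ∀ v, ∃ B, ∀ s, ‖g v s‖ ≤ B) : V →ₗ[ℂ] LS n ν where
  toFun v := toLS (g v) (hg v)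
  map_add' v w := by
    ext s
    simp [toLS_apply]
  map_smul' a v := by
    ext s
    simp [toLS_apply]

lemma linLS_apply {V : Type*} [AddCommGroup V] [Module ℂ V] (g : V →ₗ[ℂ] (Sph n ν → ℂ))
    (hg : ∀ v, ∃ B, ∀ s, ‖g v s‖ ≤ B) (v : V) (s : Sph n ν) : linLS g hg v s = g v s := rfl

/-- Inclusion of `ℓ∞(S)` into all functions on `S`. -/
noncomputable def inclLS (n : ℕ) (ν : (Fin n → ℂ) → ℝ) : LS n ν →ₗ[ℂ] (Sph n ν → ℂ) where
  toFun f s := f s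
  map_add' f g := by ext s; simp
  map_smul' a f := by ext s; simp

lemma inclLS_apply (f : LS n ν) (s : Sph n ν) : inclLS n ν f s = f s := rfl

/-- `pol` as a linear function of the coefficients. -/
noncomputable def polLin (ν : (Fin n → ℂ) → ℝ) (I : Finset (Fin n → ℕ)) :
    ((Fin n → ℕ) → ℂ) →ₗ[ℂ] (Sph n ν → ℂ) where
  toFun c s := pol I c s
  map_add' c d := by ext s; simp [pol, add_mul, Finset.sum_add_distrib]
  map_smul' a c := by ext s; simp [pol, mul_assoc, Finset.mul_sum]

/-- The map sending coefficients to the restriction of the polynomial to the sphere. -/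
noncomputable def polMap (h : IsNu n ν) (I : Finset (Fin n → ℕ)) :
    ((Fin n → ℕ) → ℂ) →ₗ[ℂ] LS n ν :=
  linLS (polLin ν I) fun c => by
    obtain ⟨B, hB⟩ := pol_bdd h I c
    exact ⟨B, fun s => hB s s.2.le⟩

lemma polMap_apply (h : IsNu n ν) (I : Finset (Fin n → ℕ)) (c : (Fin n → ℕ) → ℂ) (s : Sph n ν) :
    polMap h I c s = pol I c s := rfl

lemma mem_polyCopy (h : IsNu n ν) (I : Finset (Fin n → ℕ)) (f : LS n ν) :
    f ∈ polyCopy n ν I ↔ ∃ c, polMap h I c = f := by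
  constructor
  · rintro ⟨c, hc⟩
    refine ⟨c, ?_⟩
    ext s
    rw [hc s]; rfl
  · rintro ⟨c, rfl⟩
    exact ⟨c, fun s => rfl⟩

/-- The linear functional with coefficient vector `w`, as a function on the sphere. -/
noncomputable def dualLin (ν : (Fin n → ℂ) → ℝ) : (Fin n → ℂ) →ₗ[ℂ] (Sph n ν → ℂ) where
  toFun w s := ∑ j, w j * (s : Fin n → ℂ) j
  map_add' c d := by ext s; simp [add_mul, Finset.sum_add_distrib]
  map_smul' a c := by ext s; simp [mul_assoc, Finset.mul_sum]

lemma dual_bdd (h : IsNu n ν) (w : Fin n → ℂ) :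
    ∃ B, 0 ≤ B ∧ ∀ z : Fin n → ℂ, ‖∑ j, w j * z j‖ ≤ B * ν z := by
  choose C hC0 hC using h.coord
  refine ⟨∑ j, ‖w j‖ * C j, Finset.sum_nonneg fun j _ => mul_nonneg (norm_nonneg _) (hC0 j),
    fun z => ?_⟩
  refine (norm_sum_le _ _).trans ?_
  rw [Finset.sum_mul]
  refine Finset.sum_le_sum fun j _ => ?_
  rw [norm_mul, mul_assoc]
  gcongr
  exact hC j z

/-- The embedding of the dual of `(ℂⁿ, ν)` into `ℓ∞(S)`. -/
noncomputable def dualMap (h : IsNu n ν) : (Fin n → ℂ) →ₗ[ℂ] LS n ν :=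
  linLS (dualLin ν) fun w => by
    obtain ⟨B, -, hB⟩ := dual_bdd h w
    refine ⟨B, fun s => ?_⟩
    have := hB s
    rw [s.2, mul_one] at this
    exact this

lemma dualMap_apply (h : IsNu n ν) (w : Fin n → ℂ) (s : Sph n ν) :
    dualMap h w s = ∑ j, w j * (s : Fin n → ℂ) j := rfl

lemma mem_dualCopy (h : IsNu n ν) (f : LS n ν) :
    f ∈ dualCopy n ν ↔ ∃ w, dualMap h w = f := by
  constructor
  · rintro ⟨c, hc⟩
    refine ⟨c, ?_⟩
    ext s
    rw [hc s]; rfl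
  · rintro ⟨c, rfl⟩
    exact ⟨c, fun s => rfl⟩

/-- Every linear map has a linear section over its range, defined on the whole codomain. -/
lemma exists_section {V W : Type*} [AddCommGroup V] [Module ℂ V] [AddCommGroup W] [Module ℂ W]
    (ι : V →ₗ[ℂ] W) : ∃ π : W →ₗ[ℂ] V, ∀ v, ι (π (ι v)) = ι v := by
  obtain ⟨g, hg⟩ := ι.rangeRestrict.exists_rightInverse_of_surjective ι.range_rangeRestrict
  obtain ⟨π, hπ⟩ := LinearMap.exists_extend g
  refine ⟨π, fun v => ?_⟩
  have h1 : π (ι v) = g (ι.rangeRestrict v) := by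
    rw [← hπ]; rfl
  rw [h1]
  exact congrArg Subtype.val (LinearMap.congr_fun hg (ι.rangeRestrict v))

/-! ### The functionals coming from a projection onto the dual -/

/-- A projection `Q` of `ℓ∞(S)` onto the dual is turned into a linear map `φ` from all
functions on `S` to `ℂⁿ` (coefficient vectors): on bounded functions `φ` is `Q`, and its values
on unbounded functions are irrelevant. Total definedness makes iteration painless. -/
lemma exists_phi (h : IsNu n ν) (Q : LS n ν →L[ℂ] LS n ν)
    (hQ1 : ∀ f, Q f ∈ dualCopy n ν) (hQ2 : ∀ f ∈ dualCopy n ν, Q f = f) :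
    ∃ φ : (Sph n ν → ℂ) →ₗ[ℂ] (Fin n → ℂ),
      (∀ (f : Sph n ν → ℂ) (B : ℝ), 0 ≤ B → (∀ s, ‖f s‖ ≤ B) → ∀ s : Sph n ν,
        ‖∑ j, φ f j * (s : Fin n → ℂ) j‖ ≤ ‖Q‖ * B) ∧
      (∀ (w : Fin n → ℂ) (z : Sph n ν), ∑ j, φ (fun s => ∑ j, w j * (s : Fin n → ℂ) j) j *
        (z : Fin n → ℂ) j = ∑ j, w j * (z : Fin n → ℂ) j) := by
  obtain ⟨π, hπ⟩ := exists_section (dualMap h)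
  obtain ⟨g, hg⟩ := (inclLS n ν).exists_leftInverse_of_injective (LinearMap.ker_eq_bot.2 (by
    intro f f' hff
    ext s
    exact congrFun hff s))
  have hπ' : ∀ f, dualMap h (π (Q f)) = Q f := by
    intro f
    obtain ⟨w, hw⟩ := (mem_dualCopy h _).1 (hQ1 f)
    rw [← hw, hπ]
  have key : ∀ (f : LS n ν) (s : Sph n ν),
      ∑ j, (π ∘ₗ Q.toLinearMap ∘ₗ g) (inclLS n ν f) j * (s : Fin n → ℂ) j = Q f s := by
    intro f s
    have : g (inclLS n ν f) = f := LinearMap.congr_fun hg f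
    simp only [LinearMap.comp_apply, this]
    rw [← dualMap_apply h]
    exact congrArg (fun u : LS n ν => u s) (hπ' f)
  refine ⟨π ∘ₗ Q.toLinearMap ∘ₗ g, ?_, ?_⟩
  · intro f B hB0 hB s
    have h1 := key (toLS f ⟨B, hB⟩) s
    have h2 : inclLS n ν (toLS f ⟨B, hB⟩) = f := rfl
    rw [h2] at h1
    rw [h1]
    refine (lp.norm_apply_le_norm ENNReal.top_ne_zero _ s).trans ((Q.le_opNorm _).trans ?_)
    gcongr
    exact lp.norm_le_of_forall_le hB0 hB
  · intro w z
    have h1 := key (dualMap h w) z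
    rw [hQ2 _ ((mem_dualCopy h _).2 ⟨w, rfl⟩)] at h1
    exact h1

/-! ### Iterating a functional over several variables -/

/-- The `m`-fold tensor power of a functional `ψ` on functions on `S`, applied to functions of
`m` variables by iteration. -/
noncomputable def iter {S : Type*} (ψ : (S → ℂ) →ₗ[ℂ] ℂ) :
    ∀ m : ℕ, ((Fin m → S) → ℂ) →ₗ[ℂ] ℂ
  | 0 => LinearMap.proj Fin.elim0
  | m + 1 => ψ ∘ₗ LinearMap.pi fun s =>
      iter ψ m ∘ₗ LinearMap.funLeft ℂ ℂ (fun t : Fin m → S => (Fin.cons s t : Fin (m + 1) → S))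

lemma iter_succ {S : Type*} (ψ : (S → ℂ) →ₗ[ℂ] ℂ) (m : ℕ) (F : (Fin (m + 1) → S) → ℂ) :
    iter ψ (m + 1) F = ψ fun s => iter ψ m fun t => F (Fin.cons s t : Fin (m + 1) → S) := rfl

lemma norm_iter_le {S : Type*} (ψ : (S → ℂ) →ₗ[ℂ] ℂ) {K : ℝ} (hK : 0 ≤ K)
    (hψ : ∀ (f : S → ℂ) (B : ℝ), 0 ≤ B → (∀ s, ‖f s‖ ≤ B) → ‖ψ f‖ ≤ K * B) (m : ℕ)
    {B : ℝ} (hB : 0 ≤ B) (F : (Fin m → S) → ℂ) (hF : ∀ s, ‖F s‖ ≤ B) :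
    ‖iter ψ m F‖ ≤ K ^ m * B := by
  induction m with
  | zero => simpa [iter] using hF _
  | succ m ih =>
    rw [iter_succ, pow_succ', mul_assoc]
    exact hψ _ _ (by positivity) fun s => ih _ fun t => hF _

lemma iter_form {V : Type*} [AddCommGroup V] [Module ℂ V] {S : Type*} (v : S → V)
    (ψ : (S → ℂ) →ₗ[ℂ] ℂ) (z : V) (hψ : ∀ l : V →ₗ[ℂ] ℂ, ψ (fun s => l (v s)) = l z) (m : ℕ)
    (T : MultilinearMap ℂ (fun _ : Fin m => V) ℂ) :
    iter ψ m (fun s => T fun i => v (s i)) = T fun _ => z := by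
  induction m with
  | zero =>
    simp only [iter, LinearMap.proj_apply]
    congr 1
    ext i
    exact i.elim0
  | succ m ih =>
    rw [iter_succ]
    have h1 : ∀ s : S, (iter ψ m fun t => T fun i => v ((Fin.cons s t : Fin (m + 1) → S) i)) =
        T.curryLeft (v s) fun _ => z := by
      intro s
      rw [← ih]
      congr 1
      ext t
      rw [MultilinearMap.curryLeft_apply]
      congr 1
      ext i
      refine Fin.cases ?_ (fun i => ?_) i <;> simp
    simp only [h1]
    let l : V →ₗ[ℂ] ℂ :=
      { toFun := fun y => T.curryLeft y fun _ => z
        map_add' := fun a b => by rw [map_add]; rfl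
        map_smul' := fun a b => by rw [map_smul]; rfl }
    have h2 := hψ l
    refine h2.trans ?_
    simp only [l, LinearMap.coe_mk, AddHom.coe_mk, MultilinearMap.curryLeft_apply]
    congr 1
    ext i
    refine Fin.cases ?_ (fun i => ?_) i <;> simp

/-- The functional `f ↦ ∑ⱼ φ(f)ⱼ zⱼ`. -/
noncomputable def phiAt {S : Type*} (φ : (S → ℂ) →ₗ[ℂ] (Fin n → ℂ)) (z : Fin n → ℂ) :
    (S → ℂ) →ₗ[ℂ] ℂ :=
  ∑ j, z j • (LinearMap.proj j ∘ₗ φ)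

lemma phiAt_apply {S : Type*} (φ : (S → ℂ) →ₗ[ℂ] (Fin n → ℂ)) (z : Fin n → ℂ) (f : S → ℂ) :
    phiAt φ z f = ∑ j, φ f j * z j := by
  simp [phiAt, mul_comm]

lemma exists_pol_succ (a : Fin n → (Fin n → ℕ) → ℂ) :
    ∃ c, ∀ z, ∑ j, (∑ α ∈ homIdx m n, a j α * ∏ i, z i ^ α i) * z j =
      pol (homIdx (m + 1) n) c z := by
  classical
  refine ⟨fun β => ∑ j, ∑ α ∈ homIdx m n, if α + Pi.single j 1 = β then a j α else 0,
    fun z => ?_⟩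
  simp only [pol, Finset.sum_mul]
  conv_rhs => rw [Finset.sum_comm]
  refine Finset.sum_congr rfl fun j _ => ?_
  conv_rhs => rw [Finset.sum_comm]
  refine Finset.sum_congr rfl fun α hα => ?_
  simp only [ite_mul, zero_mul]
  rw [Finset.sum_ite_eq, if_pos]
  · simp only [Pi.add_apply, pow_add, Finset.prod_mul_distrib]
    have : ∏ i, z i ^ (Pi.single j 1 : Fin n → ℕ) i = z j := by
      rw [Finset.prod_eq_single j]
      · simp
      · intro b _ hb; simp [Pi.single_eq_of_ne hb]
      · simp
    rw [this, mul_assoc]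
  · rw [mem_homIdx] at hα ⊢
    simp [Finset.sum_add_distrib, hα]

/-- The iterated functional depends polynomially on `z`. -/
lemma iter_pol {S : Type*} (φ : (S → ℂ) →ₗ[ℂ] (Fin n → ℂ)) (m : ℕ) (F : (Fin m → S) → ℂ) :
    ∃ c, ∀ z, iter (phiAt φ z) m F = pol (homIdx m n) c z := by
  induction m with
  | zero =>
    refine ⟨fun _ => F Fin.elim0, fun z => ?_⟩
    have : homIdx 0 n = {0} := by
      ext α
      rw [mem_homIdx]
      simp [funext_iff]
    simp [pol, this, iter]
  | succ m ih =>
    choose c hc using fun s => ih (fun t => F (Fin.cons s t : Fin (m + 1) → S))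
    obtain ⟨d, hd⟩ := exists_pol_succ (m := m) (fun j α => φ (fun s => c s α) j)
    refine ⟨d, fun z => ?_⟩
    rw [iter_succ, ← hd, phiAt_apply]
    simp only [hc]
    have h1 : (fun s => pol (homIdx m n) (c s) z) =
        ∑ α ∈ homIdx m n, (∏ i, z i ^ α i) • (fun s => c s α) := by
      ext s
      simp [pol, mul_comm]
    refine Finset.sum_congr rfl fun j _ => ?_
    rw [h1, map_sum]
    simp [mul_comm]

end Lp

/-! ### The coefficient projection -/

section Main
variable {n m : ℕ} {ν : (Fin n → ℂ) → ℝ}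

lemma coeff_eq_zero_of_sphere (h : IsNu n ν) (hm : 1 ≤ m) (c : (Fin n → ℕ) → ℂ)
    (hc : ∀ s : Sph n ν, pol (homIdx m n) c s = 0) : ∀ α ∈ homIdx m n, c α = 0 := by
  refine pol_coeff_eq_zero c fun z => ?_
  have := norm_pol_le_of_sphere (M := 0) h hm subset_rfl c (fun s => by simp [hc s]) z
  simpa using this

/-- Boundedness of the coefficient projection, from equivalence of norms on the coefficient
space `ℂ^{Λ(m,n)}`. -/
lemma coeffProj_bdd (h : IsNu n ν) (hm : 1 ≤ m) {J : Finset (Fin n → ℕ)}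
    (hJ : J ⊆ homIdx m n) :
    ∃ B, ∀ c, polNorm n ν (homIdx m n) c ≤ 1 → polNorm n ν J c ≤ B := by
  classical
  let ext0 : (homIdx m n → ℂ) →ₗ[ℂ] ((Fin n → ℕ) → ℂ) :=
    LinearMap.pi fun α => if hα : α ∈ homIdx m n then LinearMap.proj ⟨α, hα⟩ else 0
  have hext : ∀ (d : homIdx m n → ℂ) (α) (hα : α ∈ homIdx m n), ext0 d α = d ⟨α, hα⟩ := by
    intro d α hα
    simp [ext0, hα]
  let N : (homIdx m n → ℂ) → ℝ := fun d => ‖polMap h (homIdx m n) (ext0 d)‖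
  have hN : ∀ α : homIdx m n, ∃ C, 0 ≤ C ∧ ∀ d, ‖d α‖ ≤ C * N d := by
    intro α
    refine core_bound N (fun d => norm_nonneg _) ?_ ?_ ?_ (LinearMap.proj α)
    · intro d hd
      have hd0 : polMap h (homIdx m n) (ext0 d) = 0 := norm_eq_zero.1 hd
      ext α
      rw [← hext d α.1 α.2]
      refine coeff_eq_zero_of_sphere h hm _ (fun s => ?_) α.1 α.2
      rw [← polMap_apply h, hd0]; rfl
    · intro a d
      simp only [N, map_smul, norm_smul]
    · intro d d'
      simp only [N, map_add]
      exact norm_add_le _ _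
  choose C hC0 hC using hN
  choose K hK0 hK using h.coord
  have hB : 0 ≤ ∑ α ∈ J, (if hα : α ∈ homIdx m n then C ⟨α, hα⟩ else 0) * ∏ j, K j ^ α j := by
    refine Finset.sum_nonneg fun α _ => mul_nonneg ?_
      (Finset.prod_nonneg fun j _ => pow_nonneg (hK0 j) _)
    split_ifs
    · exact hC0 _
    · exact le_rfl
  refine ⟨_, fun c hc => polNorm_le h hm hJ c hB fun s => ?_⟩
  refine (norm_sum_le _ _).trans (Finset.sum_le_sum fun α hα => ?_)
  rw [norm_mul, norm_prod, dif_pos (hJ hα)]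
  have h1 : ‖c α‖ ≤ C ⟨α, hJ hα⟩ := by
    refine (hC ⟨α, hJ hα⟩ (fun α => c α.1)).trans (mul_le_of_le_one_right (hC0 _) ?_)
    refine lp.norm_le_of_forall_le zero_le_one fun s => ?_
    rw [polMap_apply]
    have : pol (homIdx m n) (ext0 fun α => c α.1) s = pol (homIdx m n) c s :=
      Finset.sum_congr rfl fun α hα => by rw [hext _ α hα]
    rw [this]
    exact (norm_pol_le_polNorm h _ c s.2.le).trans hc
  refine mul_le_mul h1 (Finset.prod_le_prod (fun j _ => norm_nonneg _) fun j _ => ?_)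
    (Finset.prod_nonneg fun j _ => norm_nonneg _) (hC0 _)
  rw [norm_pow]
  have := hK j s
  rw [s.2, mul_one] at this
  gcongr

lemma polNorm_nonneg (I : Finset (Fin n → ℕ)) (c : (Fin n → ℕ) → ℂ) : 0 ≤ polNorm n ν I c := by
  refine Real.sSup_nonneg ?_
  rintro _ ⟨z, -, rfl⟩
  exact norm_nonneg _

lemma coeffProjNorm_nonneg (J : Finset (Fin n → ℕ)) : 0 ≤ coeffProjNorm n m ν J := by
  refine Real.sSup_nonneg ?_
  rintro _ ⟨z, -, rfl⟩
  exact polNorm_nonneg _ _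

lemma coeffProjNorm_homIdx_le : coeffProjNorm n m ν (homIdx m n) ≤ 1 := by
  refine Real.sSup_le ?_ zero_le_one
  rintro _ ⟨c, hc, rfl⟩
  exact hc

lemma norm_pol_le_coeffProj (h : IsNu n ν) (hm : 1 ≤ m) {J : Finset (Fin n → ℕ)}
    (hJ : J ⊆ homIdx m n) (c : (Fin n → ℕ) → ℂ) {M : ℝ} (hM : 0 ≤ M)
    (hc : ∀ s : Sph n ν, ‖pol (homIdx m n) c s‖ ≤ M) (s : Sph n ν) :
    ‖pol J c s‖ ≤ coeffProjNorm n m ν J * M := by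
  rcases hM.eq_or_lt with rfl | hM
  · have h0 := coeff_eq_zero_of_sphere h hm c (fun s => by simpa using hc s)
    have : pol J c s = 0 := Finset.sum_eq_zero fun α hα => by rw [h0 α (hJ hα), zero_mul]
    simp [this]
  · have hpol : ∀ (I : Finset (Fin n → ℕ)) y, pol I (fun α => ((M : ℂ))⁻¹ * c α) y =
        ((M : ℂ))⁻¹ * pol I c y := by
      intro I y
      simp only [pol, Finset.mul_sum, mul_assoc]
    have hMn : ‖((M : ℂ))⁻¹‖ = M⁻¹ := by
      rw [norm_inv, Complex.norm_real, Real.norm_of_nonneg hM.le]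
    have h1 : polNorm n ν (homIdx m n) (fun α => ((M : ℂ))⁻¹ * c α) ≤ 1 :=
      polNorm_le h hm subset_rfl _ zero_le_one fun s => by
        rw [hpol, norm_mul, hMn, inv_mul_le_iff₀ hM, mul_one]
        exact hc s
    have h2 : polNorm n ν J (fun α => ((M : ℂ))⁻¹ * c α) ≤ coeffProjNorm n m ν J := by
      obtain ⟨B, hB⟩ := coeffProj_bdd h hm hJ
      refine le_csSup ⟨B, ?_⟩ ⟨_, h1, rfl⟩
      rintro _ ⟨c, hc, rfl⟩
      exact hB c hc
    have h3 := (norm_pol_le_polNorm h J (fun α => ((M : ℂ))⁻¹ * c α) s.2.le).trans h2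
    rw [hpol, norm_mul, hMn, inv_mul_le_iff₀ hM] at h3
    linarith

/-! ### Extending the polarization functionals -/

/-- The `m`-homogeneous extension of a function on the sphere, evaluated at `y`. -/
noncomputable def homEval (h : IsNu n ν) (m : ℕ) (y : Fin n → ℂ) : LS n ν →ₗ[ℂ] ℂ :=
  open Classical in
  if hy : y = 0 then 0 else
    (ν y : ℂ) ^ m • (LinearMap.proj (h.decomp y hy).choose ∘ₗ inclLS n ν)

lemma homEval_polMap (h : IsNu n ν) (hm : 1 ≤ m) (c : (Fin n → ℕ) → ℂ) (y : Fin n → ℂ) :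
    homEval h m y (polMap h (homIdx m n) c) = pol (homIdx m n) c y := by
  unfold homEval
  split_ifs with hy
  · rw [hy, pol_zero hm subset_rfl]; rfl
  · have h1 := (h.decomp y hy).choose_spec
    conv_rhs => rw [h1, pol_smul subset_rfl]
    rfl

/-- For each tuple `s` in `Sᵐ`, Hahn–Banach extends the functional `P ↦ P̌(s)` from the polynomials
to all of `ℓ∞(S)` with norm at most the polarization constant. -/
lemma exists_polar_ext (h : IsNu n ν) (hm : 1 ≤ m) (s : Fin m → Sph n ν) :
    ∃ g : LS n ν →L[ℂ] ℂ, ‖g‖ ≤ polarConst n m ν ∧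
      ∀ (c : (Fin n → ℕ) → ℂ) (T : MultilinearMap ℂ (fun _ : Fin m => (Fin n → ℂ)) ℂ),
      (∀ (σ : Equiv.Perm (Fin m)) (z : Fin m → (Fin n → ℂ)), T (z ∘ σ) = T z) →
      (∀ z, T (fun _ => z) = pol (homIdx m n) c z) →
      g (polMap h (homIdx m n) c) = T fun i => s i := by
  -- The polarization formula defines the functional on the whole of `ℓ∞(S)`, hence linearly.
  let L : LS n ν →ₗ[ℂ] ℂ := ((2 : ℂ) ^ m * (Nat.factorial m : ℂ))⁻¹ •
    ∑ ε : Fin m → ℤˣ, (∏ i, (((ε i : ℤ)) : ℂ)) •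
      homEval h m (∑ i, (((ε i : ℤ)) : ℂ) • (s i : Fin n → ℂ))
  have hL : ∀ (c : (Fin n → ℕ) → ℂ) (T : MultilinearMap ℂ (fun _ : Fin m => (Fin n → ℂ)) ℂ),
      (∀ (σ : Equiv.Perm (Fin m)) (z : Fin m → (Fin n → ℂ)), T (z ∘ σ) = T z) →
      (∀ z, T (fun _ => z) = pol (homIdx m n) c z) →
      L (polMap h (homIdx m n) c) = T fun i => s i := by
    intro c T hT hc
    have h1 := polarization T hT (fun i => (s i : Fin n → ℂ))
    simp only [L, LinearMap.smul_apply, LinearMap.sum_apply, homEval_polMap h hm, smul_eq_mul]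
    simp only [hc] at h1
    rw [h1, inv_mul_cancel_left₀]
    exact mul_ne_zero (pow_ne_zero _ two_ne_zero) (by exact_mod_cast Nat.factorial_ne_zero m)
  let p : Submodule ℂ (LS n ν) := LinearMap.range (polMap h (homIdx m n))
  let f : StrongDual ℂ p := LinearMap.mkContinuous (L ∘ₗ p.subtype) (polarConst n m ν) (by
    rintro ⟨_, c, rfl⟩
    obtain ⟨T, hT, hc⟩ := exists_sym_form (m := m) c
    have h1 : (L ∘ₗ p.subtype) ⟨polMap h (homIdx m n) c, c, rfl⟩ = T fun i => s i := hL c T hT hc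
    rw [h1]
    refine norm_form_le_of_sphere h hm hT hc (norm_nonneg _) (fun t => ?_) _ fun i => (s i).2.le
    exact lp.norm_apply_le_norm ENNReal.top_ne_zero (polMap h (homIdx m n) c) t)
  obtain ⟨g, hg1, hg2⟩ := exists_extension_norm_eq p f
  refine ⟨g, ?_, fun c T hT hc => ?_⟩
  · rw [hg2]
    exact LinearMap.mkContinuous_norm_le _ polarConst_nonneg _
  · rw [← hL c T hT hc]
    exact hg1 ⟨polMap h (homIdx m n) c, c, rfl⟩

/-! ### The projection onto the polynomials -/

/-- A projection `Q` onto the dual induces a projection onto `𝒫_J` whose norm is controlled by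
`c(m,X) ‖Q_J‖ ‖Q‖^m`. -/
lemma projConst_le_of_proj (h : IsNu n ν) (hm : 1 ≤ m) {J : Finset (Fin n → ℕ)}
    (hJ : J ⊆ homIdx m n) (Q : LS n ν →L[ℂ] LS n ν)
    (hQ1 : ∀ f, Q f ∈ dualCopy n ν) (hQ2 : ∀ f ∈ dualCopy n ν, Q f = f) :
    projConst n ν J ≤ polarConst n m ν * coeffProjNorm n m ν J * ‖Q‖ ^ m := by
  classical
  obtain ⟨φ, hφ1, hφ2⟩ := exists_phi h Q hQ1 hQ2
  choose g hg1 hg2 using exists_polar_ext (ν := ν) h hm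
  have hc0 : 0 ≤ polarConst n m ν := polarConst_nonneg
  have hq0 : 0 ≤ coeffProjNorm n m ν J := coeffProjNorm_nonneg J
  let G : LS n ν →ₗ[ℂ] ((Fin m → Sph n ν) → ℂ) := LinearMap.pi fun s => (g s).toLinearMap
  have hG : ∀ f s, ‖G f s‖ ≤ polarConst n m ν * ‖f‖ := fun f s =>
    ((g s).le_opNorm f).trans (mul_le_mul_of_nonneg_right (hg1 s) (norm_nonneg f))
  let R0 : LS n ν →ₗ[ℂ] (Sph n ν → ℂ) := LinearMap.pi fun z => iter (phiAt φ z) m ∘ₗ G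
  have hR0 : ∀ f z, ‖R0 f z‖ ≤ ‖Q‖ ^ m * (polarConst n m ν * ‖f‖) := by
    intro f z
    refine norm_iter_le (phiAt φ z) (norm_nonneg Q) (fun u B hB hu => ?_) m (by positivity) _ (hG f)
    rw [phiAt_apply]
    exact hφ1 u B hB hu z
  let R : LS n ν →ₗ[ℂ] LS n ν := linLS R0 fun f => ⟨_, hR0 f⟩
  have hRmem : ∀ f, ∃ c, polMap h (homIdx m n) c = R f := by
    intro f
    obtain ⟨c, hc⟩ := iter_pol φ m (G f)
    refine ⟨c, ?_⟩
    ext s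
    exact (hc s).symm
  have hRid : ∀ c, R (polMap h (homIdx m n) c) = polMap h (homIdx m n) c := by
    intro c
    obtain ⟨T, hT, hc⟩ := exists_sym_form (m := m) c
    ext z
    rw [polMap_apply, ← hc]
    have h1 : G (polMap h (homIdx m n) c) = fun s => T fun i => s i := by
      ext s
      exact hg2 s c T hT hc
    have h2 : R (polMap h (homIdx m n) c) z = iter (phiAt φ z) m (G (polMap h (homIdx m n) c)) :=
      rfl
    rw [h2, h1]
    refine iter_form (fun s : Sph n ν => (s : Fin n → ℂ)) _ _ (fun l => ?_) m T
    have hl : ∀ y : Fin n → ℂ, l y = ∑ j, l (Pi.single j 1) * y j := by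
      intro y
      conv_lhs => rw [pi_eq_sum_univ' y, map_sum]
      refine Finset.sum_congr rfl fun j _ => ?_
      rw [map_smul, smul_eq_mul, mul_comm]
    have hl' : (fun s : Sph n ν => l s) =
        fun s : Sph n ν => ∑ j, l (Pi.single j 1) * (s : Fin n → ℂ) j := funext fun s => hl s
    rw [phiAt_apply, hl', hl z]
    exact hφ2 (fun j => l (Pi.single j 1)) z
  obtain ⟨π, hπ⟩ := exists_section (polMap h (homIdx m n))
  have hπR : ∀ f, polMap h (homIdx m n) (π (R f)) = R f := by
    intro f
    obtain ⟨c, hc⟩ := hRmem f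
    rw [← hc, hπ]
  have hbound : ∀ f, ‖(polMap h J ∘ₗ π ∘ₗ R) f‖ ≤
      polarConst n m ν * coeffProjNorm n m ν J * ‖Q‖ ^ m * ‖f‖ := by
    intro f
    refine lp.norm_le_of_forall_le (by positivity) fun s => ?_
    refine (norm_pol_le_coeffProj h hm hJ (π (R f))
      (M := ‖Q‖ ^ m * (polarConst n m ν * ‖f‖)) (by positivity) (fun t => ?_) s).trans
        (le_of_eq (by ring))
    rw [← polMap_apply h, hπR]
    exact hR0 f t
  let P : LS n ν →L[ℂ] LS n ν := LinearMap.mkContinuous (polMap h J ∘ₗ π ∘ₗ R) _ hbound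
  have hP : ‖P‖ ≤ polarConst n m ν * coeffProjNorm n m ν J * ‖Q‖ ^ m :=
    LinearMap.mkContinuous_norm_le _ (by positivity) _
  refine le_trans ?_ hP
  unfold projConst
  refine csInf_le ⟨0, ?_⟩ ⟨P, fun f => ?_, fun f hf => ?_, rfl⟩
  · rintro _ ⟨Q, -, -, rfl⟩
    exact norm_nonneg _
  · exact (mem_polyCopy h J _).2 ⟨_, rfl⟩
  · obtain ⟨c, rfl⟩ := (mem_polyCopy h J _).1 hf
    -- Setting the coefficients outside `J` to zero exhibits `f` as an `m`-homogeneous polynomial.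
    let c' : (Fin n → ℕ) → ℂ := fun α => if α ∈ J then c α else 0
    have hc' : polMap h J c = polMap h (homIdx m n) c' := by
      ext s
      simp only [polMap_apply, pol, c', ite_mul, zero_mul]
      rw [← Finset.sum_filter, Finset.filter_mem_eq_inter, Finset.inter_eq_right.2 hJ]
    have h1 : polMap h (homIdx m n) (π (R (polMap h J c)) - c') = 0 := by
      rw [map_sub, hπR, hc', hRid, sub_self]
    have h2 := coeff_eq_zero_of_sphere h hm _ (fun s => by
      rw [← polMap_apply h, h1]; rfl)
    change polMap h J (π (R (polMap h J c))) = polMap h J c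
    ext s
    simp only [polMap_apply]
    refine Finset.sum_congr rfl fun α hα => ?_
    have h3 := h2 α (hJ hα)
    simp only [Pi.sub_apply, c', if_pos hα] at h3
    rw [sub_eq_zero.1 h3]

/-- There is some projection onto the dual: interpolate at the normalized unit vectors. -/
lemma exists_dual_proj (h : IsNu n ν) : ∃ Q : LS n ν →L[ℂ] LS n ν,
    (∀ f, Q f ∈ dualCopy n ν) ∧ (∀ f ∈ dualCopy n ν, Q f = f) := by
  classical
  have he : ∀ j : Fin n, (Pi.single j 1 : Fin n → ℂ) ≠ 0 := fun j => by simp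
  choose e hne using fun j => h.decomp _ (he j)
  choose C hC0 hC using h.coord
  let W : LS n ν →ₗ[ℂ] (Fin n → ℂ) := LinearMap.pi fun j =>
    (ν (Pi.single j 1) : ℂ) • (LinearMap.proj (e j) ∘ₗ inclLS n ν)
  have hW : ∀ f j, W f j = (ν (Pi.single j 1) : ℂ) * f (e j) := fun f j => rfl
  have hb : ∀ f, ‖(dualMap h ∘ₗ W) f‖ ≤ (∑ j, ν (Pi.single j 1) * C j) * ‖f‖ := by
    intro f
    have hnn : 0 ≤ ∑ j, ν (Pi.single j 1) * C j :=
      Finset.sum_nonneg fun j _ => mul_nonneg (h.nonneg _) (hC0 j)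
    refine lp.norm_le_of_forall_le (by positivity) fun s => ?_
    rw [LinearMap.comp_apply, dualMap_apply, Finset.sum_mul]
    refine (norm_sum_le _ _).trans (Finset.sum_le_sum fun j _ => ?_)
    rw [hW, norm_mul, norm_mul, Complex.norm_real, Real.norm_of_nonneg (h.nonneg _)]
    have h1 := hC j s
    rw [s.2, mul_one] at h1
    have h2 : ‖f (e j)‖ ≤ ‖f‖ := lp.norm_apply_le_norm ENNReal.top_ne_zero f (e j)
    rw [mul_assoc, mul_assoc, mul_comm (C j)]
    have := h.nonneg (Pi.single j 1)
    gcongr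
  refine ⟨LinearMap.mkContinuous _ _ hb, fun f => (mem_dualCopy h _).2 ⟨_, rfl⟩, fun f hf => ?_⟩
  obtain ⟨w, rfl⟩ := (mem_dualCopy h _).1 hf
  change dualMap h (W (dualMap h w)) = dualMap h w
  congr 1
  ext j
  rw [hW, dualMap_apply, Finset.mul_sum]
  have h1 : ∀ i, (ν (Pi.single j 1) : ℂ) * (w i * (e j : Fin n → ℂ) i) =
      w i * (Pi.single j 1 : Fin n → ℂ) i := by
    intro i
    conv_rhs => rw [hne j]
    simp only [Pi.smul_apply, smul_eq_mul]
    ring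
  simp only [h1]
  rw [Finset.sum_eq_single j]
  · simp
  · intro b _ hb; simp [Pi.single_eq_of_ne hb]
  · simp

lemma dualProjConst_nonneg : 0 ≤ dualProjConst n ν := by
  refine Real.sInf_nonneg ?_
  rintro _ ⟨Q, -, -, rfl⟩
  exact norm_nonneg _

lemma projConst_le (h : IsNu n ν) (hm : 1 ≤ m) {J : Finset (Fin n → ℕ)}
    (hJ : J ⊆ homIdx m n) :
    projConst n ν J ≤ polarConst n m ν * coeffProjNorm n m ν J * dualProjConst n ν ^ m := by
  have hK : 0 ≤ polarConst n m ν * coeffProjNorm n m ν J :=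
    mul_nonneg polarConst_nonneg (coeffProjNorm_nonneg J)
  have h1 : ∀ r > dualProjConst n ν,
      projConst n ν J ≤ polarConst n m ν * coeffProjNorm n m ν J * r ^ m := by
    intro r hr
    obtain ⟨Q0, hQ0⟩ := exists_dual_proj h
    unfold dualProjConst at hr
    obtain ⟨_, ⟨Q, hQ1, hQ2, rfl⟩, hlt⟩ := exists_lt_of_csInf_lt
      (by exact ⟨‖Q0‖, Q0, hQ0.1, hQ0.2, rfl⟩) hr
    refine (projConst_le_of_proj h hm hJ Q hQ1 hQ2).trans ?_
    gcongr
  have hcont : Filter.Tendsto (fun r : ℝ => polarConst n m ν * coeffProjNorm n m ν J * r ^ m)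
      (nhdsWithin (dualProjConst n ν) (Set.Ioi (dualProjConst n ν)))
      (nhds (polarConst n m ν * coeffProjNorm n m ν J * dualProjConst n ν ^ m)) := by
    have : Continuous (fun r : ℝ => polarConst n m ν * coeffProjNorm n m ν J * r ^ m) := by
      fun_prop
    exact (this.tendsto _).mono_left nhdsWithin_le_nhds
  exact ge_of_tendsto hcont (Filter.eventually_of_mem self_mem_nhdsWithin h1)

end Main

/-- **`λ(𝒫_J(X_n)) ≤ c(m,X_n) · ‖Q_{Λ(m,n),J}‖ · λ(X_n*)^m`**, and in particular
`λ(𝒫_m(X_n)) ≤ (m^m/m!) · λ(X_n*)^m`. -/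
theorem stmt_11 (n m : ℕ) (hm : 1 ≤ m) (ν : (Fin n → ℂ) → ℝ)
    (hdef : ∀ z, ν z = 0 → z = 0)
    (hsmul : ∀ (a : ℂ) (z : Fin n → ℂ), ν (a • z) = ‖a‖ * ν z)
    (htri : ∀ z w : Fin n → ℂ, ν (z + w) ≤ ν z + ν w)
    (J : Finset (Fin n → ℕ)) (hJne : J.Nonempty) (hJhom : J ⊆ homIdx m n) :
    projConst n ν J ≤ polarConst n m ν * coeffProjNorm n m ν J * dualProjConst n ν ^ m ∧
    projConst n ν (homIdx m n) ≤
      ((m : ℝ) ^ m / (Nat.factorial m : ℝ)) * dualProjConst n ν ^ m := by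
  have h : IsNu n ν := ⟨hdef, hsmul, htri⟩
  refine ⟨projConst_le h hm hJhom, (projConst_le h hm subset_rfl).trans ?_⟩
  refine mul_le_mul_of_nonneg_right ?_ (pow_nonneg dualProjConst_nonneg m)
  exact (mul_le_of_le_one_right polarConst_nonneg coeffProjNorm_homIdx_le).trans
    (polarConst_le h hm)
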